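/- arXiv:1803.02888 — 2 statements merged into one kernel-verified Lean document; each statement's English description precedes it below -/
import Mathlib

section
/- Let G be a graph on {1,...,n}, and r,k ≥ 1 with k ≥ r and r·k even. Then N_{r,k}(G) = (3/2)·r·(k-r+1) if and only if G contains an (r,t)-subgraph with t = (1/2)·r·(k-r+1). -/
open SimpleGraph

def IsExtension (n r k : ℕ) (G : SimpleGraph (Fin n)) (H : SimpleGraph (Fin (n + r))) : Prop :=
  (∀ i : Fin n, (H.neighborSet (Fin.castAdd r i)).ncard = (G.neighborSet i).ncard) ∧
  (∀ j : Fin r, (H.neighborSet (Fin.natAdd n j)).ncard = k)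

def E1 (n r : ℕ) (H : SimpleGraph (Fin (n + r))) : Set (Sym2 (Fin (n + r))) :=
  {e | e ∈ H.edgeSet ∧ ∃ i : Fin n, Fin.castAdd r i ∈ e}

def oldEdges (n r : ℕ) (G : SimpleGraph (Fin n)) : Set (Sym2 (Fin (n + r))) :=
  Sym2.map (Fin.castAdd r) '' G.edgeSet

noncomputable def editCost (n r : ℕ) (G : SimpleGraph (Fin n)) (H : SimpleGraph (Fin (n + r))) : ℕ :=
  (oldEdges n r G \ E1 n r H).ncard + (E1 n r H \ oldEdges n r G).ncard

noncomputable def editNumber (n r k : ℕ) (G : SimpleGraph (Fin n)) : ℕ∞ :=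
  sInf ((fun H => (editCost n r G H : ℕ∞)) '' {H | IsExtension n r k G H})

def IsRTSubgraph {V : Type*} (G : SimpleGraph V) (r t : ℕ) (S : Set (Sym2 V)) : Prop :=
  S ⊆ G.edgeSet ∧ S.ncard = t ∧ ∀ v : V, {e | e ∈ S ∧ v ∈ e}.ncard ≤ r

open Classical in
lemma roundRobin (r : ℕ) (hr : 1 ≤ r) (d : ℕ → ℕ) (hd : ∀ i, d i ≤ r) :
    ∃ C : ℕ → Finset (Fin r), (∀ i, (C i).card = d i) ∧
      ∀ n (j : Fin r), ∑ i ∈ Finset.range n, (if j ∈ C i then 1 else 0)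
        = ((Finset.range (∑ i ∈ Finset.range n, d i)).filter (fun x => x % r = j)).card := by
  set P : ℕ → ℕ := fun n => ∑ i ∈ Finset.range n, d i with hP
  have key : ∀ i, Set.InjOn (fun x => (⟨x % r, Nat.mod_lt _ hr⟩ : Fin r))
      (Finset.Ico (P i) (P i + d i) : Finset ℕ) := by
    intro i x hx y hy hxy
    have h1 : x % r = y % r := by simpa using hxy
    simp only [Finset.coe_Ico, Set.mem_Ico] at hx hy
    have := hd i
    rcases le_total x y with h | h
    · have h2 := (Nat.modEq_iff_dvd' h).1 h1
      have := Nat.eq_zero_of_dvd_of_lt h2 (by omega)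
      omega
    · have h2 := (Nat.modEq_iff_dvd' h).1 h1.symm
      have := Nat.eq_zero_of_dvd_of_lt h2 (by omega)
      omega
  refine ⟨fun i => (Finset.Ico (P i) (P i + d i)).image
    (fun x => (⟨x % r, Nat.mod_lt _ hr⟩ : Fin r)), ?_, ?_⟩
  · intro i
    rw [Finset.card_image_of_injOn (key i)]; simp
  · intro n j
    induction n with
    | zero => simp
    | succ n ih =>
      rw [Finset.sum_range_succ, ih]
      have e : ∑ i ∈ Finset.range (n+1), d i = P n + d n := by simp [hP, Finset.sum_range_succ]
      rw [e]
      have e2 : Finset.range (P n + d n) = Finset.range (P n) ∪ Finset.Ico (P n) (P n + d n) := by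
        ext x; simp; omega
      rw [e2, Finset.filter_union, Finset.card_union_of_disjoint]
      · congr 1
        split_ifs with h
        · rw [Finset.mem_image] at h
          obtain ⟨x, hx, hxj⟩ := h
          symm
          rw [Finset.card_eq_one]
          refine ⟨x, ?_⟩
          ext y
          simp only [Finset.mem_filter, Finset.mem_singleton]
          constructor
          · rintro ⟨hy, hyj⟩
            apply key n hy hx
            simp only [hxj]
            exact Fin.ext hyj
          · rintro rfl
            exact ⟨hx, by rw [← hxj]⟩
        · symm
          rw [Finset.card_eq_zero, Finset.filter_eq_empty_iff]
          intro x hx hxj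
          exact h (Finset.mem_image.2 ⟨x, hx, Fin.ext hxj⟩)
      · rw [Finset.disjoint_left]
        intro x hx hy
        simp at hx hy
        omega

lemma card_mod (r m : ℕ) (j : Fin r) :
    ((Finset.range (r * m)).filter (fun x => x % r = j)).card = m := by
  rw [← Nat.count_eq_card_filter_range]
  induction m with
  | zero => simp
  | succ m ih =>
    have h := Nat.count_modEq_card (r := r) (r * m + r) (by have := j.2; omega) j
    have h2 := Nat.count_modEq_card (r := r) (r * m) (by have := j.2; omega) j
    have hr : 0 < r := by have := j.2; omega
    simp only [Nat.ModEq, Nat.mod_eq_of_lt j.2] at h h2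
    rw [mul_add, mul_one, h]
    simp [Nat.add_div_right _ hr, hr]

open Classical in
lemma exists_bip (n r m : ℕ) (hr : 1 ≤ r) (d : Fin n → ℕ) (hd : ∀ i, d i ≤ r)
    (hs : ∑ i, d i = r * m) :
    ∃ C : Fin n → Finset (Fin r), (∀ i, (C i).card = d i) ∧
      ∀ j, (Finset.univ.filter (fun i => j ∈ C i)).card = m := by
  obtain ⟨C, h1, h2⟩ := roundRobin r hr (fun i => if h : i < n then d ⟨i, h⟩ else 0)
    (by intro i; split_ifs <;> simp [hd])
  refine ⟨fun i => C i, ?_, ?_⟩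
  · intro i; simp [h1]
  · intro j
    have := h2 n j
    rw [Finset.sum_range, Finset.sum_range] at this
    simp only [Fin.is_lt, dite_true, Fin.eta, hs, card_mod] at this
    rw [Finset.card_filter, ← this]

open Classical in
lemma cost_formula (n r : ℕ) (G : SimpleGraph (Fin n)) (H : SimpleGraph (Fin (n + r))) :
    editCost n r G H = (G \ H.comap (Fin.castAdd r)).edgeSet.ncard
      + ((H.comap (Fin.castAdd r) \ G).edgeSet.ncard
      + (Finset.univ.filter (fun p : Fin n × Fin r =>
          H.Adj (Fin.castAdd r p.1) (Fin.natAdd n p.2))).card) := by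
  have inj : Function.Injective (Sym2.map (Fin.castAdd (n := n) r)) :=
    Sym2.map.injective (Fin.castAdd_injective n r)
  unfold editCost
  congr 1
  · rw [← Set.ncard_image_of_injective _ inj]
    congr 1
    ext e
    simp only [oldEdges, E1, Set.mem_sdiff, Set.mem_image]
    constructor
    · rintro ⟨⟨f, hf, rfl⟩, h⟩
      refine ⟨f, ?_, rfl⟩
      induction f with | _ x y
      simp at h hf ⊢
      refine ⟨hf, fun hh => ?_⟩
      exact h hh
    · rintro ⟨f, hf, rfl⟩
      induction f with | _ x y
      simp at hf
      refine ⟨⟨_, hf.1, rfl⟩, fun h => hf.2 (by simpa using h.1)⟩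
  · rw [← Set.ncard_image_of_injective _ inj, ← Set.ncard_coe_finset]
    have inj2 : Function.Injective
        (fun p : Fin n × Fin r => s(Fin.castAdd r p.1, Fin.natAdd n p.2)) := by
      rintro ⟨a, b⟩ ⟨c, d⟩ h
      simp [Fin.ext_iff] at h
      ext <;> simp <;> omega
    rw [← Set.ncard_image_of_injective _ inj2, ← Set.ncard_union_eq]
    · congr 1
      ext e
      induction e with | _ x y
      simp only [oldEdges, E1, Set.mem_sdiff, Set.mem_image, Set.mem_union, Set.mem_ofPred_eq]
      constructor
      · rintro ⟨⟨he, i, hi⟩, h⟩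
        wlog hxi : x = Fin.castAdd r i generalizing x y
        · rw [Sym2.eq_swap]
          refine this y x ?_ ?_ ?_ ?_
          · rwa [Sym2.eq_swap]
          · rwa [Sym2.eq_swap]
          · rwa [Sym2.eq_swap]
          · simp at hi; rcases hi with hi | hi
            · exact absurd hi.symm hxi
            · exact hi.symm
        subst hxi
        induction y using Fin.addCases with
        | left j =>
          left
          refine ⟨s(i, j), ?_, rfl⟩
          simp at he ⊢
          exact ⟨he, fun hg => h ⟨s(i,j), hg, rfl⟩⟩
        | right j =>
          right
          exact ⟨(i, j), by simpa using he, rfl⟩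
      · rintro (⟨f, hf, hfe⟩ | ⟨⟨i, j⟩, hp, hpe⟩)
        · rw [← hfe]
          induction f with | _ a b
          simp at hf
          refine ⟨⟨by simpa using hf.1, a, by simp⟩, ?_⟩
          rintro ⟨g, hg, hge⟩
          have := inj hge
          subst this
          exact hf.2 hg
        · rw [← hpe]
          simp at hp
          refine ⟨⟨by simpa using hp, i, by simp⟩, ?_⟩
          rintro ⟨g, hg, hge⟩
          induction g with | _ a b
          simp [Fin.ext_iff] at hge
          omega
    · rw [Set.disjoint_left]
      rintro _ ⟨f, hf, rfl⟩ ⟨⟨i, j⟩, hp, hpe⟩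
      induction f with | _ a b
      simp [Fin.ext_iff] at hpe
      omega

open Classical in
lemma deg_split {n r : ℕ} (H : SimpleGraph (Fin (n + r))) (v : Fin (n + r)) :
    (H.neighborSet v).ncard = (Finset.univ.filter (fun i => H.Adj v (Fin.castAdd r i))).card
      + (Finset.univ.filter (fun j => H.Adj v (Fin.natAdd n j))).card := by
  rw [Set.ncard_eq_toFinset_card', Finset.card_filter, Finset.card_filter, ← Fin.sum_univ_add
    (f := fun w => if H.Adj v w then 1 else 0), ← Finset.card_filter]
  congr 1
  ext; simp

/-- Degree, as the cardinality of the neighbour set. -/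
noncomputable def dg {V : Type*} (G : SimpleGraph V) (v : V) : ℕ := (G.neighborSet v).ncard

lemma dg_eq {V : Type*} [Fintype V] (G : SimpleGraph V) (v : V) [Fintype (G.neighborSet v)] :
    dg G v = G.degree v := by
  rw [dg, Set.ncard_eq_toFinset_card', ← card_neighborFinset_eq_degree]; rfl

lemma deg_diff {V : Type*} [Fintype V] (G K : SimpleGraph V) (v : V) :
    dg (G \ K) v + dg (G ⊓ K) v = dg G v := by
  unfold dg
  rw [← Set.ncard_union_eq]
  · congr 1
    ext w; simp <;> tauto
  · rw [Set.disjoint_left]; intro w; simp <;> tauto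

lemma ncard_edges {V : Type*} [Fintype V] (G : SimpleGraph V) :
    ∑ v, dg G v = 2 * G.edgeSet.ncard := by
  classical
  simp only [dg_eq]
  rw [sum_degrees_eq_twice_card_edges, Set.ncard_eq_toFinset_card']; rfl

lemma ncard_inc {V : Type*} [Fintype V] (G : SimpleGraph V) (v : V) :
    {e | e ∈ G.edgeSet ∧ v ∈ e}.ncard = dg G v := by
  classical
  rw [dg_eq, ← card_incidenceFinset_eq_degree, Set.ncard_eq_toFinset_card']
  congr 1
  ext e
  simp [incidenceSet]

lemma deg_filter {V : Type*} [Fintype V] (G : SimpleGraph V) (v : V) (p : V → Prop)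
    [DecidablePred p] (hp : ∀ i, p i ↔ G.Adj v i) :
    (Finset.univ.filter p).card = dg G v := by
  rw [dg, ← Set.ncard_coe_finset]
  congr 1
  ext; simp [hp]

open Classical in
lemma ext_facts (n r k : ℕ) (G : SimpleGraph (Fin n)) (H : SimpleGraph (Fin (n + r)))
    (hr : 1 ≤ r) (hrk : r ≤ k) (h : IsExtension n r k G H) :
    ∃ a o b, a = (G \ H.comap (Fin.castAdd r)).edgeSet.ncard ∧
      o = (H.comap (Fin.castAdd r) \ G).edgeSet.ncard ∧
      editCost n r G H = a + (o + b) ∧ 2 * a = 2 * o + b ∧ r * (k - r + 1) ≤ b ∧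
      ∀ i, dg (G \ H.comap (Fin.castAdd r)) i ≤
        dg (H.comap (Fin.castAdd r) \ G) i + r := by
  obtain ⟨h1, h2⟩ := h
  set H' := H.comap (Fin.castAdd r) with hH'
  set c : Fin n → ℕ := fun i =>
    (Finset.univ.filter (fun j => H.Adj (Fin.castAdd r i) (Fin.natAdd n j))).card with hc
  have hdeg : ∀ i, dg (G \ H') i = dg (H' \ G) i + c i := by
    intro i
    have e := h1 i
    rw [deg_split] at e
    change _ = dg G i at e
    have e1 := deg_diff G H' i
    have e2 := deg_diff H' G i
    have e3 : dg (H' ⊓ G) i = dg (G ⊓ H') i := by rw [inf_comm]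
    rw [deg_filter H' i (fun w => H.Adj (Fin.castAdd r i) (Fin.castAdd r w))
      (fun _ => Iff.rfl)] at e
    simp only [hc]
    omega
  have hb : (Finset.univ.filter (fun p : Fin n × Fin r =>
          H.Adj (Fin.castAdd r p.1) (Fin.natAdd n p.2))).card = ∑ i, c i := by
    simp only [hc, Finset.card_filter]
    rw [← Finset.univ_product_univ, Finset.sum_product]
  refine ⟨_, _, ∑ i, c i, rfl, rfl, ?_, ?_, ?_, ?_⟩
  · rw [cost_formula, hb]
  · rw [← ncard_edges, ← ncard_edges, ← Finset.sum_add_distrib]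
    exact Finset.sum_congr rfl fun i _ => hdeg i
  · have hcol : ∀ j : Fin r, k - r + 1 ≤
        (Finset.univ.filter (fun i => H.Adj (Fin.natAdd n j) (Fin.castAdd r i))).card := by
      intro j
      have e := h2 j
      rw [deg_split] at e
      have e4 := deg_filter (H.comap (Fin.natAdd n)) j _ (fun _ => Iff.rfl)
      have e5 := (H.comap (Fin.natAdd (m := r) n)).degree_lt_card_verts j
      rw [← dg_eq] at e5
      simp only [comap_adj] at e4
      rw [Fintype.card_fin] at e5
      omega
    calc r * (k - r + 1) = ∑ j : Fin r, (k - r + 1) := by simp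
      _ ≤ _ := Finset.sum_le_sum fun j _ => hcol j
      _ = _ := by
        simp only [hc, Finset.card_filter]
        rw [Finset.sum_comm]
        simp only [H.adj_comm]
  · intro i
    rw [hdeg]
    have : c i ≤ r := by
      simp only [hc]
      exact (Finset.card_le_univ _).trans (by simp)
    omega

def extSum {n r : ℕ} (K : SimpleGraph (Fin n)) (C : Fin n → Finset (Fin r)) :
    SimpleGraph (Fin n ⊕ Fin r) where
  Adj x y := match x, y with
    | .inl i, .inl j => K.Adj i j
    | .inl i, .inr j => j ∈ C i
    | .inr j, .inl i => j ∈ C i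
    | .inr i, .inr j => i ≠ j
  symm := ⟨by
    rintro (x | x) (y | y) h
    · exact K.adj_symm h
    · exact h
    · exact h
    · exact Ne.symm h⟩
  loopless := ⟨by
    rintro (x | x) h
    · exact K.loopless.irrefl x h
    · exact h rfl⟩

def extGraph {n r : ℕ} (K : SimpleGraph (Fin n)) (C : Fin n → Finset (Fin r)) :
    SimpleGraph (Fin (n + r)) := (extSum K C).comap finSumFinEquiv.symm

open Classical in
lemma exists_ext (n r k : ℕ) (G : SimpleGraph (Fin n))
    (hr : 1 ≤ r) (hrk : r ≤ k) (heven : Even (r * (k - r + 1))) (S : Set (Sym2 (Fin n)))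
    (hS : IsRTSubgraph G r (r * (k - r + 1) / 2) S) :
    ∃ H, IsExtension n r k G H ∧ editCost n r G H = 3 * (r * (k - r + 1)) / 2 := by
  obtain ⟨hSG, hcard, hdeg⟩ := hS
  set T := fromEdgeSet S with hT
  have hTe : T.edgeSet = S := by
    rw [hT, edgeSet_fromEdgeSet]
    ext e
    simp only [Set.mem_sdiff, and_iff_left_iff_imp]
    intro he hd
    exact G.not_isDiag_of_mem_edgeSet (hSG he) hd
  have hTG : T ≤ G := by rw [← edgeSet_subset_edgeSet, hTe]; exact hSG
  have hTd : ∀ i, dg T i ≤ r := by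
    intro i; rw [← ncard_inc, hTe]; exact hdeg i
  have hsum : ∑ i, dg T i = r * (k - r + 1) := by
    rw [ncard_edges, hTe, hcard]; exact Nat.two_mul_div_two_of_even heven
  obtain ⟨C, hC1, hC2⟩ := exists_bip n r (k - r + 1) hr _ hTd hsum
  set H := extGraph (G \ T) C with hH
  have a1 : ∀ i j, H.Adj (Fin.castAdd r i) (Fin.castAdd r j) ↔ (G \ T).Adj i j := by
    intro i j; simp [hH, extGraph, extSum]
  have a2 : ∀ i j, H.Adj (Fin.castAdd r i) (Fin.natAdd n j) ↔ j ∈ C i := by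
    intro i j; simp [hH, extGraph, extSum]
  have a3 : ∀ i j, H.Adj (Fin.natAdd n i) (Fin.castAdd r j) ↔ i ∈ C j := by
    intro i j; simp [hH, extGraph, extSum]
  have a4 : ∀ i j, H.Adj (Fin.natAdd n i) (Fin.natAdd n j) ↔ i ≠ j := by
    intro i j; simp [hH, extGraph, extSum]
  have hcm : H.comap (Fin.castAdd r) = G \ T := by
    ext i j; rw [comap_adj, a1]
  refine ⟨H, ⟨?_, ?_⟩, ?_⟩
  · intro i
    rw [deg_split]
    change _ = dg G i
    simp only [a1, a2]
    rw [deg_filter (G \ T) i _ (fun _ => Iff.rfl)]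
    have e := deg_diff G T i
    have e2 : dg (G ⊓ T) i = dg T i := by
      simp only [inf_eq_right.2 hTG]
    rw [← e, e2, ← hC1]
    simp
  · intro j
    rw [deg_split]
    simp only [a3, a4]
    rw [hC2, Finset.filter_ne, Finset.card_erase_of_mem (Finset.mem_univ _)]
    simp
    omega
  · have hb : (Finset.univ.filter (fun p : Fin n × Fin r => p.2 ∈ C p.1)).card
        = ∑ i, dg T i := by
      rw [Finset.card_filter, ← Finset.univ_product_univ, Finset.sum_product]
      refine Finset.sum_congr rfl fun i _ => ?_
      rw [← hC1, ← Finset.card_filter]; simp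
    rw [cost_formula, hcm]
    simp only [a2]
    rw [hb, hsum, sdiff_sdiff_right_self, inf_eq_right.2 hTG, hTe, hcard,
      sdiff_eq_bot_iff.2 sdiff_le]
    simp
    omega

theorem edit_number_eq_iff_subgraph (n r k : ℕ) (G : SimpleGraph (Fin n))
    (hr : 1 ≤ r) (hk : 1 ≤ k) (hrk : r ≤ k) (heven : Even (r * k)) :
    editNumber n r k G = ((3 * (r * (k - r + 1)) / 2 : ℕ) : ℕ∞) ↔
      ∃ S : Set (Sym2 (Fin n)), IsRTSubgraph G r (r * (k - r + 1) / 2) S := by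
  classical
  have hev : Even (r * (k - r + 1)) := by
    obtain ⟨m, rfl⟩ := Nat.exists_eq_add_of_le hrk
    simp only [Nat.add_sub_cancel_left]
    rw [Nat.even_mul] at heven ⊢
    simp only [Nat.even_add, Nat.not_even_one] at heven ⊢
    tauto
  constructor
  · intro h
    have hne : ((fun H => (editCost n r G H : ℕ∞)) '' {H | IsExtension n r k G H}).Nonempty := by
      by_contra hne
      rw [Set.not_nonempty_iff_eq_empty] at hne
      rw [editNumber, hne, sInf_empty] at h
      exact ENat.top_ne_natCast _ h
    obtain ⟨H, hH, hc⟩ := csInf_mem hne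
    change (editCost n r G H : ℕ∞) = editNumber n r k G at hc
    rw [h] at hc
    have hc' : editCost n r G H = 3 * (r * (k - r + 1)) / 2 := by exact_mod_cast hc
    obtain ⟨a, o, b, ha, ho, h1, h2, h3, h4⟩ := ext_facts n r k G H hr hrk hH
    obtain ⟨q, hq⟩ := hev
    have ho0 : o = 0 := by omega
    refine ⟨(G \ H.comap (Fin.castAdd r)).edgeSet, ?_, ?_, ?_⟩
    · exact edgeSet_subset_edgeSet.2 sdiff_le
    · rw [← ha]; omega
    · intro v
      rw [ncard_inc]
      have h5 := ncard_edges (H.comap (Fin.castAdd r) \ G)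
      rw [← ho, ho0, mul_zero, Finset.sum_eq_zero_iff] at h5
      have := h5 v (Finset.mem_univ _)
      have := h4 v
      omega
  · rintro ⟨S, hS⟩
    obtain ⟨H, hH, hc⟩ := exists_ext n r k G hr hrk hev S hS
    apply le_antisymm
    · exact sInf_le ⟨H, hH, by simp only [hc]⟩
    · apply le_sInf
      rintro _ ⟨K, hK, rfl⟩
      obtain ⟨a, o, b, ha, ho, h1, h2, h3, h4⟩ := ext_facts n r k G K hr hrk hK
      have : 3 * (r * (k - r + 1)) / 2 ≤ editCost n r G K := by omega
      change _ ≤ (editCost n r G K : ℕ∞)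
      exact_mod_cast this
end

section
/- Let k-r ≥ 1 be odd with r·k even. If a graph G contains r pairwise edge-disjoint matchings each of size (k-r+1)/2, then G is optimally (r,k)-extendable, i.e., N_{r,k}(G) = (3/2)·r·(k-r+1). -/
open SimpleGraph

def IsMatchingSet {V : Type*} (G : SimpleGraph V) (m : ℕ) (M : Set (Sym2 V)) : Prop :=
  M ⊆ G.edgeSet ∧ M.ncard = m ∧ ∀ e ∈ M, ∀ f ∈ M, e ≠ f → ∀ v, v ∈ e → v ∉ f

namespace DM

lemma ind_ex {α : Type*} [Fintype α] (P : α → Prop) [DecidablePred P] [Decidable (∃ a, P a)]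
    (h : ∀ a b, P a → P b → a = b) :
    (∑ a, if P a then 1 else 0) = if ∃ a, P a then 1 else (0 : ℕ) := by
  by_cases hP : ∃ a, P a
  · obtain ⟨a, ha⟩ := hP
    rw [if_pos ⟨a, ha⟩, Finset.sum_eq_single a]
    · simp [ha]
    · intro b _ hb
      rw [if_neg]
      intro hPb
      exact hb (h _ _ hPb ha)
    · simp
  · rw [if_neg hP]
    apply Finset.sum_eq_zero
    intro a _
    rw [if_neg]
    exact fun ha => hP ⟨a, ha⟩

open Classical in
lemma ncard_ind {α : Type*} [Fintype α] (P : α → Prop) :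
    {a | P a}.ncard = ∑ a, if P a then 1 else (0 : ℕ) := by
  rw [Set.ncard_eq_toFinset_card', Finset.sum_boole]
  simp

open Classical in
lemma sum_adj {n : ℕ} (G : SimpleGraph (Fin n)) :
    (∑ v, ∑ w, if G.Adj v w then 1 else (0 : ℕ)) = 2 * G.edgeSet.ncard := by
  rw [Set.ncard_eq_toFinset_card', ← SimpleGraph.edgeFinset,
    ← SimpleGraph.sum_degrees_eq_twice_card_edges]
  apply Finset.sum_congr rfl
  intro v _
  rw [Finset.sum_boole, ← SimpleGraph.card_neighborFinset_eq_degree,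
    SimpleGraph.neighborFinset_eq_filter]
  simp

/-- the induced graph on old vertices -/
def oldG (n r : ℕ) (H : SimpleGraph (Fin (n + r))) : SimpleGraph (Fin n) :=
  H.comap (Fin.castAdd r)

open Classical in
lemma deg_split {n r : ℕ} (H : SimpleGraph (Fin (n + r))) (v : Fin (n + r)) :
    (H.neighborSet v).ncard = (∑ i : Fin n, if H.Adj v (Fin.castAdd r i) then 1 else 0)
      + ∑ j : Fin r, if H.Adj v (Fin.natAdd n j) then 1 else (0 : ℕ) := by
  have : H.neighborSet v = {w | H.Adj v w} := rfl
  rw [this, ncard_ind, Fin.sum_univ_add]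

lemma ne_cast_nat {n r : ℕ} (i : Fin n) (j : Fin r) : Fin.castAdd r i ≠ Fin.natAdd n j := by
  intro h
  have := congrArg Fin.val h
  simp at this
  omega

def crossSet (n r : ℕ) (H : SimpleGraph (Fin (n + r))) : Set (Sym2 (Fin (n + r))) :=
  (fun p : Fin n × Fin r => s(Fin.castAdd r p.1, Fin.natAdd n p.2)) ''
    {p | H.Adj (Fin.castAdd r p.1) (Fin.natAdd n p.2)}

open Classical in
lemma cross_ncard {n r : ℕ} (H : SimpleGraph (Fin (n + r))) :
    (crossSet n r H).ncard =
      ∑ i : Fin n, ∑ j : Fin r, if H.Adj (Fin.castAdd r i) (Fin.natAdd n j) then 1 else (0 : ℕ) := by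
  unfold crossSet
  rw [Set.ncard_image_of_injective, ncard_ind, Fintype.sum_prod_type]
  rintro ⟨a, b⟩ ⟨c, d⟩ h
  simp only [Sym2.eq_iff] at h
  rcases h with ⟨h1, h2⟩ | ⟨h1, h2⟩
  · exact Prod.ext (Fin.castAdd_injective _ _ h1) (Fin.natAdd_injective _ _ h2)
  · exact absurd h1 (ne_cast_nat _ _)

lemma E1_eq {n r : ℕ} (H : SimpleGraph (Fin (n + r))) :
    E1 n r H = oldEdges n r (oldG n r H) ∪ crossSet n r H := by
  ext e
  constructor
  · rintro ⟨he, i, hi⟩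
    obtain ⟨y, rfl⟩ := Sym2.mem_iff_exists.1 hi
    rw [SimpleGraph.mem_edgeSet] at he
    induction y using Fin.addCases with
    | left a => exact Or.inl ⟨s(i, a), he, rfl⟩
    | right b => exact Or.inr ⟨(i, b), he, rfl⟩
  · rintro (⟨f, hf, rfl⟩ | ⟨⟨i, j⟩, hp, rfl⟩)
    · induction f using Sym2.ind with
      | _ a b => exact ⟨hf, a, by simp⟩
    · exact ⟨hp, i, by simp⟩

lemma cross_disj {n r : ℕ} (G : SimpleGraph (Fin n)) (H : SimpleGraph (Fin (n + r))) :
    Disjoint (oldEdges n r G) (crossSet n r H) := by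
  rw [Set.disjoint_left]
  rintro _ ⟨f, hf, rfl⟩ ⟨⟨i, j⟩, hp, h⟩
  have : Fin.natAdd n j ∈ Sym2.map (Fin.castAdd r) f := by rw [← h]; simp
  rw [Sym2.mem_map] at this
  obtain ⟨a, _, ha⟩ := this
  exact ne_cast_nat _ _ ha

lemma cost_eq {n r : ℕ} (G : SimpleGraph (Fin n)) (H : SimpleGraph (Fin (n + r))) :
    editCost n r G H = (G.edgeSet \ (oldG n r H).edgeSet).ncard
      + ((oldG n r H).edgeSet \ G.edgeSet).ncard + (crossSet n r H).ncard := by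
  have hinj : Function.Injective (Sym2.map (Fin.castAdd r (n := n))) :=
    Sym2.map.injective (Fin.castAdd_injective _ _)
  unfold editCost
  rw [E1_eq]
  have h1 : oldEdges n r G \ (oldEdges n r (oldG n r H) ∪ crossSet n r H)
      = Sym2.map (Fin.castAdd r) '' (G.edgeSet \ (oldG n r H).edgeSet) := by
    rw [Set.image_sdiff hinj, ← Set.sdiff_sdiff,
      (((cross_disj G H)).mono_left Set.sdiff_subset).sdiff_eq_left]
    rfl
  have h2 : (oldEdges n r (oldG n r H) ∪ crossSet n r H) \ oldEdges n r G
      = Sym2.map (Fin.castAdd r) '' ((oldG n r H).edgeSet \ G.edgeSet) ∪ crossSet n r H := by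
    rw [Set.image_sdiff hinj, Set.union_sdiff_distrib, (cross_disj G H).symm.sdiff_eq_left]
    rfl
  rw [h1, h2, Set.ncard_union_eq, Set.ncard_image_of_injective _ hinj,
    Set.ncard_image_of_injective _ hinj, add_assoc]
  · refine (cross_disj (oldG n r H) H).mono_left ?_
    exact Set.image_mono Set.sdiff_subset

lemma balance {n r k : ℕ} {G : SimpleGraph (Fin n)} {H : SimpleGraph (Fin (n + r))}
    (h : IsExtension n r k G H) :
    2 * (oldG n r H).edgeSet.ncard + (crossSet n r H).ncard = 2 * G.edgeSet.ncard := by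
  classical
  rw [← sum_adj, ← sum_adj, cross_ncard, ← Finset.sum_add_distrib]
  apply Finset.sum_congr rfl
  intro i _
  rw [← ncard_ind (fun w => G.Adj i w)]
  have := h.1 i
  rw [deg_split] at this
  exact this

lemma cross_ge {n r k : ℕ} {G : SimpleGraph (Fin n)} {H : SimpleGraph (Fin (n + r))}
    (h : IsExtension n r k G H) (hrk : r + 1 ≤ k) :
    r * (k - r + 1) ≤ (crossSet n r H).ncard := by
  classical
  rw [cross_ncard, Finset.sum_comm]
  have : ∀ j : Fin r, k - r + 1 ≤
      ∑ i : Fin n, if H.Adj (Fin.castAdd r i) (Fin.natAdd n j) then 1 else 0 := by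
    intro j
    have h2 := h.2 j
    rw [deg_split] at h2
    have h3 : (∑ j' : Fin r, if H.Adj (Fin.natAdd n j) (Fin.natAdd n j') then 1 else 0) + 1 ≤ r := by
      have : (∑ j' : Fin r, if H.Adj (Fin.natAdd n j) (Fin.natAdd n j') then 1 else 0)
          < ∑ j' : Fin r, 1 := by
        apply Finset.sum_lt_sum
        · intro i _; split_ifs <;> simp
        · exact ⟨j, by simp, by simp⟩
      simp only [Finset.sum_const, Finset.card_univ, Fintype.card_fin, smul_eq_mul, mul_one] at this
      exact this
    simp only [H.adj_comm _ (Fin.natAdd n j)]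
    omega
  calc r * (k - r + 1) = ∑ j : Fin r, (k - r + 1) := by simp
    _ ≤ _ := Finset.sum_le_sum (fun j _ => this j)

lemma lower {n r k m : ℕ} {G : SimpleGraph (Fin n)} {H : SimpleGraph (Fin (n + r))}
    (h : IsExtension n r k G H) (hrk : r + 1 ≤ k) (hm : k - r + 1 = 2 * m) :
    3 * (r * m) ≤ editCost n r G H := by
  rw [cost_eq]
  have h1 := balance h
  have h2 := cross_ge h hrk
  have h3 := Set.le_ncard_sdiff (oldG n r H).edgeSet G.edgeSet (Set.toFinite _)
  rw [hm] at h2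
  have : r * (2 * m) = 2 * (r * m) := by ring
  omega

/-- adjacency of the extension on the sum type -/
def sumG {n r : ℕ} (G : SimpleGraph (Fin n)) (M : Fin r → Set (Sym2 (Fin n))) :
    SimpleGraph (Fin n ⊕ Fin r) where
  Adj x y := match x, y with
    | Sum.inl a, Sum.inl b => G.Adj a b ∧ ¬ ∃ i, s(a, b) ∈ M i
    | Sum.inl a, Sum.inr j => ∃ w, s(a, w) ∈ M j
    | Sum.inr j, Sum.inl a => ∃ w, s(a, w) ∈ M j
    | Sum.inr i, Sum.inr j => i ≠ j
  symm := ⟨by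
    rintro (a | a) (b | b) h
    · exact ⟨h.1.symm, by rw [Sym2.eq_swap]; exact h.2⟩
    · exact h
    · exact h
    · exact Ne.symm h⟩
  loopless := ⟨by
    rintro (a | a) h
    · exact h.1.ne rfl
    · exact h rfl⟩

def ext {n r : ℕ} (G : SimpleGraph (Fin n)) (M : Fin r → Set (Sym2 (Fin n))) :
    SimpleGraph (Fin (n + r)) := (sumG G M).comap finSumFinEquiv.symm

section
variable {n r : ℕ} (G : SimpleGraph (Fin n)) (M : Fin r → Set (Sym2 (Fin n)))

lemma ext_cc (a b : Fin n) : (ext G M).Adj (Fin.castAdd r a) (Fin.castAdd r b) ↔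
    G.Adj a b ∧ ¬ ∃ i, s(a, b) ∈ M i := by
  simp only [ext, SimpleGraph.comap_adj, finSumFinEquiv_symm_apply_castAdd]; rfl

lemma ext_cn (a : Fin n) (j : Fin r) : (ext G M).Adj (Fin.castAdd r a) (Fin.natAdd n j) ↔
    ∃ w, s(a, w) ∈ M j := by
  simp only [ext, SimpleGraph.comap_adj, finSumFinEquiv_symm_apply_castAdd,
    finSumFinEquiv_symm_apply_natAdd]; rfl

lemma ext_nc (a : Fin n) (j : Fin r) : (ext G M).Adj (Fin.natAdd n j) (Fin.castAdd r a) ↔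
    ∃ w, s(a, w) ∈ M j := by
  rw [SimpleGraph.adj_comm, ext_cn]

lemma ext_nn (i j : Fin r) : (ext G M).Adj (Fin.natAdd n i) (Fin.natAdd n j) ↔ i ≠ j := by
  simp only [ext, SimpleGraph.comap_adj, finSumFinEquiv_symm_apply_natAdd]; rfl

end

lemma match_unique {n m : ℕ} {G : SimpleGraph (Fin n)} {N : Set (Sym2 (Fin n))}
    (h : IsMatchingSet G m N) (v a b : Fin n) (ha : s(v, a) ∈ N) (hb : s(v, b) ∈ N) : a = b := by
  by_contra hne
  exact h.2.2 _ ha _ hb (fun he => hne (Sym2.congr_right.1 he)) v (by simp) (by simp)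

open Classical in
lemma cover_sum {n m : ℕ} {G : SimpleGraph (Fin n)} {N : Set (Sym2 (Fin n))}
    (h : IsMatchingSet G m N) :
    (∑ v, if ∃ w, s(v, w) ∈ N then 1 else (0 : ℕ)) = 2 * m := by
  have h1 : (SimpleGraph.fromEdgeSet N).edgeSet = N := by
    rw [SimpleGraph.edgeSet_fromEdgeSet, sdiff_eq_left, Set.disjoint_left]
    intro e he hd
    exact G.not_isDiag_of_mem_edgeSet (h.1 he) hd
  rw [← h.2.1]
  conv_rhs => rw [← h1]
  rw [← sum_adj]
  apply Finset.sum_congr rfl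
  intro v _
  rw [← ind_ex (fun w => s(v, w) ∈ N) (match_unique h v)]
  apply Finset.sum_congr rfl
  intro w _
  congr 1
  rw [← SimpleGraph.mem_edgeSet, h1]

lemma upper {n r k m : ℕ} {G : SimpleGraph (Fin n)} {M : Fin r → Set (Sym2 (Fin n))}
    (hM : ∀ i, IsMatchingSet G m (M i)) (hdisj : ∀ i j, i ≠ j → Disjoint (M i) (M j))
    (hr : 1 ≤ r) (hrk : r + 1 ≤ k) (hm : k - r + 1 = 2 * m) :
    IsExtension n r k G (ext G M) ∧ editCost n r G (ext G M) = 3 * (r * m) := by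
  classical
  have hext : IsExtension n r k G (ext G M) := by
    constructor
    · intro i
      have hG : G.neighborSet i = {w | G.Adj i w} := rfl
      rw [deg_split, hG, ncard_ind]
      simp only [ext_cc, ext_cn]
      have : ∀ j : Fin r, (if ∃ w, s(i, w) ∈ M j then 1 else 0)
          = ∑ w, if s(i, w) ∈ M j then 1 else 0 :=
        fun j => (ind_ex _ (match_unique (hM j) i)).symm
      rw [Finset.sum_congr rfl (fun j _ => this j), Finset.sum_comm, ← Finset.sum_add_distrib]
      apply Finset.sum_congr rfl
      intro w _
      rw [ind_ex (fun j => s(i, w) ∈ M j)]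
      · by_cases hw : ∃ j, s(i, w) ∈ M j
        · have hGw : G.Adj i w := by
            obtain ⟨j, hj⟩ := hw
            exact (hM j).1 hj
          simp [hw, hGw]
        · simp [hw]
      · intro a b ha hb
        by_contra hne
        exact Set.disjoint_left.1 (hdisj a b hne) ha hb
    · intro j
      rw [deg_split]
      simp only [ext_nc, ext_nn]
      rw [cover_sum (hM j), Finset.sum_boole, Finset.filter_ne]
      simp
      omega
  refine ⟨hext, ?_⟩
  have hb := balance hext
  have hle : (oldG n r (ext G M)).edgeSet ⊆ G.edgeSet := by
    apply SimpleGraph.edgeSet_subset_edgeSet.2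
    intro a b hab
    exact ((ext_cc G M a b).1 hab).1
  have hc : (crossSet n r (ext G M)).ncard = r * (2 * m) := by
    rw [cross_ncard, Finset.sum_comm]
    simp only [ext_cn]
    rw [Finset.sum_congr rfl (fun j _ => cover_sum (hM j))]
    simp
  have h2 := Set.ncard_sdiff_add_ncard_of_subset hle
  rw [cost_eq, Set.sdiff_eq_empty.2 hle, Set.ncard_empty]
  have : r * (2 * m) = 2 * (r * m) := by ring
  omega

end DM

theorem disjoint_matchings_optimally_extendable (n r k : ℕ) (G : SimpleGraph (Fin n))
    (hr : 1 ≤ r) (hrk : r + 1 ≤ k) (hodd : Odd (k - r)) (heven : Even (r * k))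
    (M : Fin r → Set (Sym2 (Fin n)))
    (hM : ∀ i, IsMatchingSet G ((k - r + 1) / 2) (M i))
    (hdisj : ∀ i j, i ≠ j → Disjoint (M i) (M j)) :
    editNumber n r k G = ((3 * (r * (k - r + 1) / 2) : ℕ) : ℕ∞) := by
  obtain ⟨t, ht⟩ := hodd
  have hm : k - r + 1 = 2 * (t + 1) := by omega
  have e1 : (k - r + 1) / 2 = t + 1 := by omega
  have e2 : r * (k - r + 1) / 2 = r * (t + 1) := by
    rw [hm, mul_left_comm]; omega
  rw [e1] at hM
  rw [e2]
  obtain ⟨h1, h2⟩ := DM.upper hM hdisj hr hrk hm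
  apply le_antisymm
  · exact sInf_le ⟨_, h1, by simp only [h2]⟩
  · apply le_sInf
    rintro _ ⟨H, hH, rfl⟩
    show ((3 * (r * (t + 1)) : ℕ) : ℕ∞) ≤ (editCost n r G H : ℕ∞)
    exact_mod_cast DM.lower hH hrk hm
end
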